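/- Let S and A be nonempty finite types, P : S → A → S → ℝ a transition kernel (P s a s' ≥ 0 for all s', and ∑_{s'} P s a s' = 1 for every pair (s,a)), r : S → A → ℝ, γ a real number with 0 ≤ γ < 1, and ε : S → A → ℝ. Define the VDN Bellman operator H by (H Q) s a = ∑_{s'} P s a s' * (r s a + γ * max_{a'} (Q s' a' + ε s' a')) − ε s a. Then there exists a unique function Q* : S → A → ℝ satisfying H Q* = Q*. -/

import Mathlib

/-!
Taking a maximum over actions moves by at most the sup distance of its arguments, and integrating
against the weights `γ * P s a ·` multiplies distances by at most `|γ| * ∑ s', |P s a s'|`. On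
finite state and action spaces these factors have a maximum, so as soon as each of them is below `1`
the Bellman operator is a contraction in the sup norm and Banach's theorem applies. For a
transition kernel every factor equals `γ`.
-/

open scoped NNReal

section FiniteFamilies

variable {ι R : Type*}

theorem abs_sup'_sub_sup'_le [AddCommGroup R] [LinearOrder R] [IsOrderedAddMonoid R]
    {s : Finset ι} (hs : s.Nonempty) {f g : ι → R} {C : R} (hfg : ∀ i ∈ s, |f i - g i| ≤ C) :
    |s.sup' hs f - s.sup' hs g| ≤ C := by
  have sup'_le_add {f g : ι → R} (h : ∀ i ∈ s, f i - g i ≤ C) : s.sup' hs f ≤ C + s.sup' hs g :=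
    Finset.sup'_le hs f fun i hi =>
      (sub_le_iff_le_add.mp (h i hi)).trans (by gcongr; exact Finset.le_sup' g hi)
  exact abs_sub_le_iff.mpr
    ⟨sub_le_iff_le_add.mpr <| sup'_le_add fun i hi => (abs_sub_le_iff.mp (hfg i hi)).1,
      sub_le_iff_le_add.mpr <| sup'_le_add fun i hi => (abs_sub_le_iff.mp (hfg i hi)).2⟩

theorem abs_sum_mul_le_sum_abs_mul [Ring R] [LinearOrder R] [IsOrderedRing R]
    {s : Finset ι} (w : ι → R) {x : ι → R} {C : R} (hx : ∀ i ∈ s, |x i| ≤ C) :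
    |∑ i ∈ s, w i * x i| ≤ (∑ i ∈ s, |w i|) * C :=
  calc
    |∑ i ∈ s, w i * x i| ≤ ∑ i ∈ s, |w i * x i| := Finset.abs_sum_le_sum_abs _ _
    _ = ∑ i ∈ s, |w i| * |x i| := by simp only [abs_mul]
    _ ≤ ∑ i ∈ s, |w i| * C := by gcongr with i hi; exact hx i hi
    _ = (∑ i ∈ s, |w i|) * C := (Finset.sum_mul ..).symm

end FiniteFamilies

section Bellman

variable {S A : Type*} [Fintype S] [Fintype A] [Nonempty A]

/-- The greedy value `max_{a'} (Q s' a' + ε s' a')` at the state `s'` of the `Q`-function corrected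
by the decomposition error `ε`. -/
def greedyValue (ε Q : S → A → ℝ) (s' : S) : ℝ :=
  Finset.univ.sup' Finset.univ_nonempty fun a' => Q s' a' + ε s' a'

/-- The VDN Bellman operator with weights `P`, reward `r`, discount factor `γ` and decomposition
error `ε`. The weights are arbitrary reals, so that the contraction estimate can be stated in terms
of `∑ s', |P s a s'|`. -/
def vdnBellman (P : S → A → S → ℝ) (r : S → A → ℝ) (γ : ℝ) (ε Q : S → A → ℝ) : S → A → ℝ :=
  fun s a => ∑ s', P s a s' * (r s a + γ * greedyValue ε Q s') - ε s a

theorem abs_greedyValue_sub_le_dist (ε Q₁ Q₂ : S → A → ℝ) (s' : S) :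
    |greedyValue ε Q₁ s' - greedyValue ε Q₂ s'| ≤ dist Q₁ Q₂ := by
  refine abs_sup'_sub_sup'_le _ fun a' _ => ?_
  rw [add_sub_add_right_eq_sub, ← Real.dist_eq]
  exact (dist_le_pi_dist (Q₁ s') (Q₂ s') a').trans (dist_le_pi_dist Q₁ Q₂ s')

variable (P : S → A → S → ℝ) (r : S → A → ℝ) (γ : ℝ) (ε : S → A → ℝ)

theorem dist_vdnBellman_apply_le (Q₁ Q₂ : S → A → ℝ) (s : S) (a : A) :
    dist (vdnBellman P r γ ε Q₁ s a) (vdnBellman P r γ ε Q₂ s a) ≤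
      (|γ| * ∑ s', |P s a s'|) * dist Q₁ Q₂ := by
  have sub_eq : vdnBellman P r γ ε Q₁ s a - vdnBellman P r γ ε Q₂ s a =
      γ * ∑ s', P s a s' * (greedyValue ε Q₁ s' - greedyValue ε Q₂ s') := by
    rw [vdnBellman, vdnBellman, sub_sub_sub_cancel_right, ← Finset.sum_sub_distrib, Finset.mul_sum]
    exact Finset.sum_congr rfl fun s' _ => by ring
  rw [Real.dist_eq, sub_eq, abs_mul, mul_assoc]
  gcongr
  exact abs_sum_mul_le_sum_abs_mul _ fun s' _ => abs_greedyValue_sub_le_dist ε Q₁ Q₂ s'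

variable {P γ}

theorem lipschitzWith_vdnBellman {K : ℝ≥0} (hK : ∀ s a, |γ| * ∑ s', |P s a s'| ≤ K) :
    LipschitzWith K (vdnBellman P r γ ε) := by
  refine LipschitzWith.of_dist_le_mul fun Q₁ Q₂ => ?_
  have bound_nonneg : 0 ≤ K * dist Q₁ Q₂ := by positivity
  refine (dist_pi_le_iff bound_nonneg).mpr fun s => (dist_pi_le_iff bound_nonneg).mpr fun a => ?_
  exact (dist_vdnBellman_apply_le P r γ ε Q₁ Q₂ s a).trans (by gcongr; exact hK s a)

theorem exists_contractingWith_vdnBellman (hPγ : ∀ s a, |γ| * ∑ s', |P s a s'| < 1) :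
    ∃ K, ContractingWith K (vdnBellman P r γ ε) := by
  let factor (p : S × A) : ℝ≥0 := (|γ| * ∑ s', |P p.1 p.2 s'|).toNNReal
  have sup_lt_one : Finset.univ.sup factor < 1 :=
    (Finset.sup_lt_iff zero_lt_one).mpr fun p _ => Real.toNNReal_lt_one.mpr (hPγ p.1 p.2)
  refine ⟨Finset.univ.sup factor, sup_lt_one, lipschitzWith_vdnBellman r ε fun s a => ?_⟩
  exact Real.toNNReal_le_iff_le_coe.mp (Finset.le_sup (f := factor) (Finset.mem_univ (s, a)))

theorem vdn_bellman_unique_fixed_point_general (hPγ : ∀ s a, |γ| * ∑ s', |P s a s'| < 1) :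
    ∃! Qstar : S → A → ℝ, vdnBellman P r γ ε Qstar = Qstar := by
  obtain ⟨K, contracting⟩ := exists_contractingWith_vdnBellman r ε hPγ
  exact ⟨contracting.fixedPoint, contracting.fixedPoint_isFixedPt,
    fun _ fixed => contracting.fixedPoint_unique fixed⟩

end Bellman

/-- The VDN Bellman operator has a unique fixed point. -/
theorem vdn_bellman_unique_fixed_point
    {S A : Type*} [Fintype S] [Fintype A] [Nonempty S] [Nonempty A]
    (P : S → A → S → ℝ) (r : S → A → ℝ) (γ : ℝ) (ε : S → A → ℝ)
    (hP0 : ∀ s a s', 0 ≤ P s a s')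
    (hP1 : ∀ s a, ∑ s', P s a s' = 1)
    (hγ0 : 0 ≤ γ) (hγ1 : γ < 1)
    (H : (S → A → ℝ) → (S → A → ℝ))
    (hH : ∀ Q s a, H Q s a =
      (∑ s', P s a s' *
        (r s a + γ * Finset.univ.sup' Finset.univ_nonempty
          (fun a' => Q s' a' + ε s' a'))) - ε s a) :
    ∃! Qstar : S → A → ℝ, H Qstar = Qstar := by
  obtain rfl : H = vdnBellman P r γ ε := funext fun Q => funext₂ (hH Q)
  exact vdn_bellman_unique_fixed_point_general r ε fun s a => by
    simpa only [abs_of_nonneg hγ0, abs_of_nonneg (hP0 s a _), hP1, mul_one] using hγ1
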